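/- Let i ≥ 1 and l₁ ≥ 1 be natural numbers and let (a_j)_{j∈ℕ} be nonnegative real numbers with Σ_{j=l₁}^∞ j^{i+1} a_j < ∞. Set S := Σ_{l=l₁}^∞ Σ_{j=l}^∞ (j−l+1)·l^{i−1}·a_j. Then S is finite and satisfies the two-sided bound: Σ_{j=l₁}^∞ [ (j^i − l₁^i)(j+1)/i − ((j+1)^{i+1} − (l₁−1)^{i+1})/(i+1) ]·a_j ≤ S ≤ Σ_{j=l₁}^∞ [ ((j+1)^{i+1} − (l₁−1)^{i+1})/i − (j^{i+1} − l₁^{i+1})/(i+1) ]·a_j. -/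

import Mathlib

/-!
Common setup: the Fourier–Plancherel transform on `L²(ℝ³;ℂ)` (Mathlib's unitary
Fourier transform with kernel `e^{-2πi x·ξ}`), characterized -- uniquely up to a.e.
equality -- by the multiplication formula against Schwartz functions; sharp
frequency cut-offs; Besov norms; and the notion of Leray–Hopf weak solution.
-/

noncomputable section

open MeasureTheory Real Complex Filter Function
open scoped ENNReal NNReal FourierTransform ComplexConjugate Classical

namespace NSE

abbrev V := EuclideanSpace ℝ (Fin 3)

/-- `IsFourierPair u v` says: `u, v ∈ L²(ℝ³;ℂ)` and `v` is (a version of) the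
Fourier–Plancherel transform `𝓕u` of `u` (unitary Fourier transform, kernel
`e^{-2πi x·ξ}`), characterized by the multiplication formula
`∫ v g = ∫ u 𝓕g` for all Schwartz functions `g`. -/
def IsFourierPair (u v : V → ℂ) : Prop :=
  MemLp u 2 volume ∧ MemLp v 2 volume ∧
    ∀ g : SchwartzMap V ℂ,
      ∫ ξ, v ξ * g ξ = ∫ x, u x * 𝓕 (⇑g) x

/-- The Fourier–Plancherel transform `𝓕u` of `u ∈ L²` (a choice of representative;
`0` if `u ∉ L²`). -/
def FT (u : V → ℂ) : V → ℂ :=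
  if h : ∃ v, IsFourierPair u v then h.choose else 0

/-- The inverse Fourier–Plancherel transform `𝓕⁻¹v` of `v ∈ L²` (a choice of
representative; `0` if `v ∉ L²`). -/
def FTinv (v : V → ℂ) : V → ℂ :=
  if h : ∃ u, IsFourierPair u v then h.choose else 0

/-- Frequency cut-off: `𝓕⁻¹(1_S · 𝓕u)`. -/
def cut (S : Set V) (u : V → ℂ) : V → ℂ := FTinv (S.indicator (FT u))

/-- High-frequency part `u^k = 𝓕⁻¹(1_{|ξ|≥k} 𝓕u)`. -/
def hi (k : ℝ) (u : V → ℂ) : V → ℂ := cut {ξ : V | k ≤ ‖ξ‖} u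

/-- Low-frequency part `u_k = 𝓕⁻¹(1_{|ξ|<k} 𝓕u)`. -/
def lo (k : ℝ) (u : V → ℂ) : V → ℂ := cut {ξ : V | ‖ξ‖ < k} u

/-- Frequency band `u_{h,k} = 𝓕⁻¹(1_{h≤|ξ|<k} 𝓕u)`. -/
def band (h k : ℝ) (u : V → ℂ) : V → ℂ := cut {ξ : V | h ≤ ‖ξ‖ ∧ ‖ξ‖ < k} u

/-- Sharp dyadic piece `Δ_j v = 𝓕⁻¹(1_{2^{j-1}≤|ξ|<2^j} 𝓕v)`. -/
def Δd (j : ℤ) (v : V → ℂ) : V → ℂ := band ((2:ℝ) ^ (j - 1)) ((2:ℝ) ^ j) v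

/-- `Δ̃₀ v = 𝓕⁻¹(1_{|ξ|<1} 𝓕v)`. -/
def Δt0 (v : V → ℂ) : V → ℂ := lo 1 v

/-- The `L^∞` norm (essential sup norm; for the frequency-localized pieces this is
the sup norm of the bounded continuous representative), valued in `[0,∞]`. -/
def nInf (v : V → ℂ) : ℝ≥0∞ := eLpNorm v ⊤ volume

/-- Inhomogeneous Besov norm `‖v‖_{B^σ_{∞,∞}}`, valued in `[0,∞]`. -/
def besov (σ : ℝ) (v : V → ℂ) : ℝ≥0∞ :=
  max (nInf (Δt0 v))
    (⨆ j : {j : ℕ // 1 ≤ j}, ENNReal.ofReal ((2:ℝ) ^ (σ * (j : ℕ))) * nInf (Δd ((j : ℕ) : ℤ) v))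

/-- Homogeneous Besov norm `‖v‖_{Ḃ^{-1}_{∞,∞}} = sup_{j∈ℤ} 2^{-j} ‖Δ_j v‖_∞`,
valued in `[0,∞]`. -/
def hbesovNeg1 (v : V → ℂ) : ℝ≥0∞ :=
  ⨆ j : ℤ, ENNReal.ofReal ((2:ℝ) ^ (-(j : ℝ))) * nInf (Δd j v)

/-- `i`-th component of a vector field, as a complex-valued function. -/
def comp (w : V → V) (i : Fin 3) : V → ℂ := fun x => ((w x i : ℝ) : ℂ)

/-- `|𝓕w(ξ)|²` (sum over the three components), valued in `[0,∞]`. -/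
def frSq (w : V → V) (ξ : V) : ℝ≥0∞ := ∑ i : Fin 3, (‖FT (comp w i) ξ‖₊ : ℝ≥0∞) ^ 2

/-- `∫ |ξ|² |𝓕w(ξ)|² dξ`. -/
def gradSq (w : V → V) : ℝ≥0∞ := ∫⁻ ξ, (‖ξ‖₊ : ℝ≥0∞) ^ 2 * frSq w ξ

/-- `‖∇w‖_{L²}² = ∫ 4π²|ξ|²|𝓕w(ξ)|² dξ`. -/
def gradSq4π (w : V → V) : ℝ≥0∞ :=
  ∫⁻ ξ, ENNReal.ofReal (4 * π ^ 2) * (‖ξ‖₊ : ℝ≥0∞) ^ 2 * frSq w ξ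

/-- `∫ (1+|ξ|²) |𝓕w(ξ)|² dξ` (squared `H¹` norm). -/
def h1Sq (w : V → V) : ℝ≥0∞ := ∫⁻ ξ, (1 + (‖ξ‖₊ : ℝ≥0∞) ^ 2) * frSq w ξ

/-- `∫ (1+|ξ|²)² |𝓕w(ξ)|² dξ` (squared `H²` norm). -/
def h2Sq (w : V → V) : ℝ≥0∞ := ∫⁻ ξ, (1 + (‖ξ‖₊ : ℝ≥0∞) ^ 2) ^ 2 * frSq w ξ

/-- Divergence-free on the Fourier side: `𝓕w(ξ)·ξ = 0` for a.e. `ξ`. -/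
def DivFreeF (w : V → V) : Prop :=
  ∀ᵐ ξ : V, (∑ i : Fin 3, FT (comp w i) ξ * ((ξ i : ℝ) : ℂ)) = 0

/-- Partial derivative `∂_i f (x)` of a scalar field. -/
def pd (f : V → ℝ) (i : Fin 3) (x : V) : ℝ :=
  fderiv ℝ f x (EuclideanSpace.single i (1:ℝ))

/-- A Leray–Hopf weak solution of the 3D Navier–Stokes equations on `(0,∞)×ℝ³`
with viscosity `ν` and divergence-free initial datum `u₀ ∈ L²(ℝ³;ℝ³)`. -/
structure IsLerayHopf (ν : ℝ) (u₀ : V → V) (u : ℝ → V → V) : Prop where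
  /-- measurability of `u` -/
  meas : Measurable (Function.uncurry u)
  /-- `u(t) ∈ L²` for `t > 0` -/
  memL2 : ∀ t : ℝ, 0 < t → MemLp (u t) 2 volume
  /-- (i) `ess sup_{t>0} ‖u(t)‖_{L²} < ∞` -/
  bddL2 : essSup (fun t => eLpNorm (u t) 2 volume) (volume.restrict (Set.Ioi (0:ℝ))) < ⊤
  /-- (i) `∫₀^∞ ∫ |ξ|²|𝓕u(t)(ξ)|² dξ dt < ∞` -/
  gradL2 : (∫⁻ t in Set.Ioi (0:ℝ), gradSq (u t)) < ⊤
  /-- (ii) `u(t)` is divergence-free for a.e. `t` -/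
  divFree : ∀ᵐ t ∂(volume.restrict (Set.Ioi (0:ℝ))), DivFreeF (u t)
  /-- (iii) the weak formulation against smooth compactly supported
  divergence-free test fields -/
  weak : ∀ φ : ℝ → V → V, ContDiff ℝ (⊤ : ℕ∞) (Function.uncurry φ) →
      HasCompactSupport (Function.uncurry φ) →
      (∀ t x, (∑ i : Fin 3, pd (fun y => φ t y i) i x) = 0) →
      (∫ t in Set.Ioi (0:ℝ), ∫ x,
          ((∑ j : Fin 3, u t x j * deriv (fun s => φ s x j) t)
            + ν * (∑ j : Fin 3, u t x j *
                ∑ i : Fin 3, pd (fun y => pd (fun z => φ t z j) i y) i x)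
            + ∑ i : Fin 3, ∑ j : Fin 3, u t x i * u t x j * pd (fun y => φ t y j) i x))
        + (∫ x, ∑ j : Fin 3, u₀ x j * φ 0 x j) = 0
  /-- (iv) the energy inequality for a.e. `t > 0` -/
  energy : ∀ᵐ t ∂(volume.restrict (Set.Ioi (0:ℝ))),
      (1/2 : ℝ≥0∞) * eLpNorm (u t) 2 volume ^ 2
          + ENNReal.ofReal ν * ∫⁻ τ in Set.Ioc (0:ℝ) t, gradSq4π (u τ)
        ≤ (1/2 : ℝ≥0∞) * eLpNorm u₀ 2 volume ^ 2

/-- `u` is regular in `(0,T]`: `u ∈ L^∞(0,T;H¹) ∩ L²(0,T;H²)`. -/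
def RegularOn (u : ℝ → V → V) (T : ℝ) : Prop :=
  essSup (fun t => h1Sq (u t)) (volume.restrict (Set.Ioo (0:ℝ) T)) < ⊤ ∧
    (∫⁻ t in Set.Ioo (0:ℝ) T, h2Sq (u t)) < ⊤

/-- Besov norm of a vector field: the largest Besov norm of its components. -/
def besovV (σ : ℝ) (w : V → V) : ℝ≥0∞ := ⨆ i : Fin 3, besov σ (comp w i)

/-!
Exchanging the order of summation collects the coefficient of `a_j`, which is
`Σ_{l=l₁}^{j} (j - l + 1) l^k = (j + 1) Σ_{l=l₁}^{j} l^k - Σ_{l=l₁}^{j} l^(k+1)` with `k = i - 1`.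
Each of the two power sums is compared with an integral of the power function. All the bounds on
the coefficient so obtained are polynomials in `j` of degree at most `k + 2`, so the assumed moment
of `a` makes every series in sight converge.
-/

lemma sum_range_add_pow_le {x : ℝ} (hx : 0 ≤ x) (k N : ℕ) :
    ∑ p ∈ Finset.range N, (x + p) ^ k ≤ ((x + N) ^ (k + 1) - x ^ (k + 1)) / (k + 1) := by
  have hmono : MonotoneOn (fun t : ℝ => t ^ k) (Set.Icc x (x + N)) :=
    fun s hs _ _ hst => pow_le_pow_left₀ (hx.trans hs.1) hst k
  simpa only [integral_pow] using hmono.sum_le_integral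

lemma le_sum_range_add_pow {x : ℝ} (hx : 1 ≤ x) (k N : ℕ) :
    ((x - 1 + N) ^ (k + 1) - (x - 1) ^ (k + 1)) / (k + 1) ≤
      ∑ p ∈ Finset.range N, (x + p) ^ k := by
  have hmono : MonotoneOn (fun t : ℝ => t ^ k) (Set.Icc (x - 1) (x - 1 + N)) :=
    fun s hs _ _ hst => pow_le_pow_left₀ ((sub_nonneg.2 hx).trans hs.1) hst k
  have hshift (p : ℕ) : x - 1 + ((p + 1 : ℕ) : ℝ) = x + p := by push_cast; ring
  simpa only [integral_pow, hshift] using hmono.integral_le_sum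

lemma hasSum_of_hasSum_sum_antidiagonal {A : Type*} [AddMonoid A] [Finset.HasAntidiagonal A]
    {f : A × A → ℝ} {s : ℝ} (hf : 0 ≤ f)
    (h : HasSum (fun n => ∑ p ∈ Finset.HasAntidiagonal.antidiagonal n, f p) s) : HasSum f s := by
  let e := Finset.HasAntidiagonal.sigmaAntidiagonalEquivProd (A := A)
  have hfiber (n : A) : HasSum (fun p : Finset.HasAntidiagonal.antidiagonal n => f (e ⟨n, p⟩))
      (∑ p ∈ Finset.HasAntidiagonal.antidiagonal n, f p) :=
    Finset.hasSum (Finset.HasAntidiagonal.antidiagonal n) f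
  have hsummable : Summable (f ∘ e) :=
    (summable_sigma_of_nonneg fun _ => hf _).2
      ⟨fun n => (hfiber n).summable, h.summable.congr fun n => (hfiber n).tsum_eq.symm⟩
  exact e.hasSum_iff.1 (HasSum.sigma_of_hasSum h hfiber hsummable)

lemma summable_eval_mul_of_natDegree_le {P : Polynomial ℝ} {d : ℕ} (hP : P.natDegree ≤ d)
    {x b : ℕ → ℝ} (hx : Tendsto x atTop atTop) (hb : Summable fun n => x n ^ d * b n) :
    Summable fun n => P.eval (x n) * b n := by
  have hP' : P.degree ≤ (Polynomial.X ^ d : Polynomial ℝ).degree := by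
    simpa only [Polynomial.degree_X_pow] using Polynomial.natDegree_le_iff_degree_le.1 hP
  have hO := (Polynomial.isBigO_atTop_of_degree_le P _ hP').comp_tendsto hx
  refine summable_of_isBigO_nat hb ?_
  simpa only [comp_def, Polynomial.eval_pow, Polynomial.eval_X]
    using hO.mul (Asymptotics.isBigO_refl b atTop)

/-- The coefficient of `a_j`, `j = L + n`, in `Σ_{l ≥ L} Σ_{j ≥ l} (j - l + 1) l^k a_j`, where `l`
and `j` run through `L + ℕ`: the pair `p` in the sum stands for `l = L + p.1` and
`j = L + p.1 + p.2`. -/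
def superpositionCoeff (k : ℕ) (L : ℝ) (n : ℕ) : ℝ :=
  ∑ p ∈ Finset.HasAntidiagonal.antidiagonal n, ((p.2 : ℝ) + 1) * (L + p.1) ^ k

lemma superpositionCoeff_nonneg (k : ℕ) {L : ℝ} (hL : 0 ≤ L) (n : ℕ) :
    0 ≤ superpositionCoeff k L n :=
  Finset.sum_nonneg fun _ _ => by positivity

lemma superpositionCoeff_eq (k : ℕ) (L : ℝ) (n : ℕ) :
    superpositionCoeff k L n =
      (L + n + 1) * ∑ p ∈ Finset.range (n + 1), (L + p) ^ k
        - ∑ p ∈ Finset.range (n + 1), (L + p) ^ (k + 1) := by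
  rw [superpositionCoeff, Finset.Nat.sum_antidiagonal_eq_sum_range_succ_mk, Finset.mul_sum,
    ← Finset.sum_sub_distrib]
  refine Finset.sum_congr rfl fun p hp => ?_
  rw [Nat.cast_sub (Finset.mem_range_succ_iff.1 hp)]
  ring

lemma superpositionCoeff_le (k : ℕ) {L : ℝ} (hL : 1 ≤ L) (n : ℕ) :
    superpositionCoeff k L n ≤
      ((L + n + 1) ^ (k + 2) - (L - 1) ^ (k + 2)) / (k + 1)
        - ((L + n) ^ (k + 2) - L ^ (k + 2)) / (k + 2) := by
  have hpow : (L - 1) ^ (k + 2) ≤ L ^ (k + 2) :=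
    pow_le_pow_left₀ (sub_nonneg.2 hL) (sub_le_self L zero_le_one) _
  have hpow_mul : (L - 1) ^ (k + 2) ≤ (L + n + 1) * L ^ (k + 1) :=
    hpow.trans <| by rw [pow_succ' L (k + 1)]; gcongr; linarith [n.cast_nonneg (α := ℝ)]
  have hsum : ∑ p ∈ Finset.range (n + 1), (L + p) ^ k ≤
      ((L + n + 1) ^ (k + 1) - L ^ (k + 1)) / (k + 1) := by
    simpa [add_assoc] using sum_range_add_pow_le (by linarith : 0 ≤ L) k (n + 1)
  have hsum_succ : ((L + n) ^ (k + 2) - (L - 1) ^ (k + 2)) / (k + 2) ≤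
      ∑ p ∈ Finset.range (n + 1), (L + p) ^ (k + 1) := by
    convert le_sum_range_add_pow hL (k + 1) (n + 1) using 2 <;> push_cast <;> ring
  calc superpositionCoeff k L n
      ≤ (L + n + 1) * (((L + n + 1) ^ (k + 1) - L ^ (k + 1)) / (k + 1))
          - ((L + n) ^ (k + 2) - (L - 1) ^ (k + 2)) / (k + 2) := by
        rw [superpositionCoeff_eq]; gcongr
    _ = ((L + n + 1) ^ (k + 2) - (L + n + 1) * L ^ (k + 1)) / (k + 1)
          - ((L + n) ^ (k + 2) - (L - 1) ^ (k + 2)) / (k + 2) := by ring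
    _ ≤ ((L + n + 1) ^ (k + 2) - (L - 1) ^ (k + 2)) / (k + 1)
          - ((L + n) ^ (k + 2) - L ^ (k + 2)) / (k + 2) := by gcongr

lemma le_superpositionCoeff (k : ℕ) {L : ℝ} (hL : 1 ≤ L) (n : ℕ) :
    ((L + n) ^ (k + 1) - L ^ (k + 1)) * (L + n + 1) / (k + 1)
        - ((L + n + 1) ^ (k + 2) - (L - 1) ^ (k + 2)) / (k + 2) ≤
      superpositionCoeff k L n := by
  have hpow (m : ℕ) : (L - 1) ^ m ≤ L ^ m :=
    pow_le_pow_left₀ (sub_nonneg.2 hL) (sub_le_self L zero_le_one) m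
  have hsum : ((L + n) ^ (k + 1) - L ^ (k + 1)) / (k + 1) ≤
      ∑ p ∈ Finset.range (n + 1), (L + p) ^ k :=
    calc ((L + n) ^ (k + 1) - L ^ (k + 1)) / (k + 1)
        ≤ ((L + n) ^ (k + 1) - (L - 1) ^ (k + 1)) / (k + 1) := by
          gcongr ?_ / _; exact sub_le_sub_left (hpow _) _
      _ ≤ ∑ p ∈ Finset.range (n + 1), (L + p) ^ k := by
          convert le_sum_range_add_pow hL k (n + 1) using 4; push_cast; ring
  have hsum_succ : ∑ p ∈ Finset.range (n + 1), (L + p) ^ (k + 1) ≤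
      ((L + n + 1) ^ (k + 2) - (L - 1) ^ (k + 2)) / (k + 2) :=
    calc ∑ p ∈ Finset.range (n + 1), (L + p) ^ (k + 1)
        ≤ ((L + n + 1) ^ (k + 2) - L ^ (k + 2)) / (k + 2) := by
          convert sum_range_add_pow_le (by linarith : 0 ≤ L) (k + 1) (n + 1) using 2 <;>
            push_cast <;> ring
      _ ≤ ((L + n + 1) ^ (k + 2) - (L - 1) ^ (k + 2)) / (k + 2) := by
          gcongr ?_ / _; exact sub_le_sub_left (hpow _) _
  rw [superpositionCoeff_eq, mul_comm _ (L + n + 1), mul_div_assoc]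
  gcongr

section Summability

variable {k : ℕ} {L : ℝ} {b : ℕ → ℝ}

open Polynomial in
lemma summable_superpositionCoeff_upper_bound_mul
    (hb : Summable fun n : ℕ => (L + n) ^ (k + 2) * b n) :
    Summable fun n : ℕ => (((L + n + 1) ^ (k + 2) - (L - 1) ^ (k + 2)) / (k + 1)
      - ((L + n) ^ (k + 2) - L ^ (k + 2)) / (k + 2)) * b n := by
  let P : ℝ[X] := ((X + 1) ^ (k + 2) - C ((L - 1) ^ (k + 2))) * C ((k + 1 : ℝ)⁻¹)
    - (X ^ (k + 2) - C (L ^ (k + 2))) * C ((k + 2 : ℝ)⁻¹)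
  have hP : P.natDegree ≤ k + 2 := by unfold P; compute_degree!
  simpa [P, div_eq_mul_inv] using summable_eval_mul_of_natDegree_le hP
    (tendsto_atTop_add_const_left _ L tendsto_natCast_atTop_atTop) hb

open Polynomial in
lemma summable_superpositionCoeff_lower_bound_mul
    (hb : Summable fun n : ℕ => (L + n) ^ (k + 2) * b n) :
    Summable fun n : ℕ => (((L + n) ^ (k + 1) - L ^ (k + 1)) * (L + n + 1) / (k + 1)
      - ((L + n + 1) ^ (k + 2) - (L - 1) ^ (k + 2)) / (k + 2)) * b n := by
  let P : ℝ[X] := (X ^ (k + 1) - C (L ^ (k + 1))) * (X + 1) * C ((k + 1 : ℝ)⁻¹)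
    - ((X + 1) ^ (k + 2) - C ((L - 1) ^ (k + 2))) * C ((k + 2 : ℝ)⁻¹)
  have hP : P.natDegree ≤ k + 2 := by unfold P; compute_degree!
  simpa [P, div_eq_mul_inv] using summable_eval_mul_of_natDegree_le hP
    (tendsto_atTop_add_const_left _ L tendsto_natCast_atTop_atTop) hb

lemma summable_superpositionCoeff_mul (hL : 1 ≤ L) (hb₀ : 0 ≤ b)
    (hb : Summable fun n : ℕ => (L + n) ^ (k + 2) * b n) :
    Summable fun n => superpositionCoeff k L n * b n :=
  (summable_superpositionCoeff_upper_bound_mul hb).of_nonneg_of_le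
    (fun n => mul_nonneg (superpositionCoeff_nonneg k (zero_le_one.trans hL) n) (hb₀ n))
    fun n => mul_le_mul_of_nonneg_right (superpositionCoeff_le k hL n) (hb₀ n)

lemma hasSum_of_hasSum_superpositionCoeff_mul (hL : 0 ≤ L) (hb₀ : 0 ≤ b) {s : ℝ}
    (h : HasSum (fun n => superpositionCoeff k L n * b n) s) :
    HasSum (fun p : ℕ × ℕ => (((p.2 : ℝ) + 1) * (L + p.1) ^ k) * b (p.1 + p.2)) s := by
  refine hasSum_of_hasSum_sum_antidiagonal
    (fun p => mul_nonneg (by positivity) (hb₀ (p.1 + p.2))) (h.congr_fun fun n => ?_)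
  rw [superpositionCoeff, Finset.sum_mul]
  exact Finset.sum_congr rfl fun p hp => by rw [Finset.HasAntidiagonal.mem_antidiagonal.1 hp]

end Summability

theorem double_sum_superposition_bounds_general (k : ℕ) {L : ℝ} (hL : 1 ≤ L) {b : ℕ → ℝ}
    (hb₀ : 0 ≤ b) (hb : Summable fun n : ℕ => (L + n) ^ (k + 2) * b n) :
    Summable (fun p : ℕ × ℕ => (((p.2 : ℝ) + 1) * (L + p.1) ^ k) * b (p.1 + p.2)) ∧
      ∑' n : ℕ, (((L + n) ^ (k + 1) - L ^ (k + 1)) * (L + n + 1) / (k + 1)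
          - ((L + n + 1) ^ (k + 2) - (L - 1) ^ (k + 2)) / (k + 2)) * b n
        ≤ ∑' p : ℕ × ℕ, (((p.2 : ℝ) + 1) * (L + p.1) ^ k) * b (p.1 + p.2) ∧
      ∑' p : ℕ × ℕ, (((p.2 : ℝ) + 1) * (L + p.1) ^ k) * b (p.1 + p.2)
        ≤ ∑' n : ℕ, (((L + n + 1) ^ (k + 2) - (L - 1) ^ (k + 2)) / (k + 1)
          - ((L + n) ^ (k + 2) - L ^ (k + 2)) / (k + 2)) * b n := by
  have hcoeff := summable_superpositionCoeff_mul hL hb₀ hb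
  have hS :=
    hasSum_of_hasSum_superpositionCoeff_mul (zero_le_one.trans hL) hb₀ hcoeff.hasSum
  refine ⟨hS.summable, ?_, ?_⟩ <;> rw [hS.tsum_eq]
  · exact (summable_superpositionCoeff_lower_bound_mul hb).tsum_le_tsum
      (fun n => mul_le_mul_of_nonneg_right (le_superpositionCoeff k hL n) (hb₀ n)) hcoeff
  · exact hcoeff.tsum_le_tsum
      (fun n => mul_le_mul_of_nonneg_right (superpositionCoeff_le k hL n) (hb₀ n))
      (summable_superpositionCoeff_upper_bound_mul hb)

/-- Two-sided bound for the weighted double sum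
`S = Σ_{l≥l₁} Σ_{j≥l} (j-l+1) l^{i-1} a_j` of a nonnegative sequence with
`Σ_{j≥l₁} j^{i+1} a_j < ∞`. -/
theorem double_sum_superposition_bounds (i l₁ : ℕ) (hi1 : 1 ≤ i) (hl1 : 1 ≤ l₁)
    (a : ℕ → ℝ) (ha : ∀ j, 0 ≤ a j)
    (hsum : Summable (fun n : ℕ => ((l₁ + n : ℕ) : ℝ) ^ (i + 1) * a (l₁ + n))) :
    Summable (fun p : ℕ × ℕ =>
        (((p.2 : ℝ) + 1) * ((l₁ + p.1 : ℕ) : ℝ) ^ (i - 1)) * a (l₁ + p.1 + p.2)) ∧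
      (∑' n : ℕ, ((((l₁ + n : ℕ) : ℝ) ^ i - (l₁ : ℝ) ^ i) * (((l₁ + n : ℕ) : ℝ) + 1) / i
            - ((((l₁ + n : ℕ) : ℝ) + 1) ^ (i + 1) - ((l₁ : ℝ) - 1) ^ (i + 1)) / (i + 1))
          * a (l₁ + n))
        ≤ (∑' p : ℕ × ℕ,
            (((p.2 : ℝ) + 1) * ((l₁ + p.1 : ℕ) : ℝ) ^ (i - 1)) * a (l₁ + p.1 + p.2)) ∧
      (∑' p : ℕ × ℕ,
          (((p.2 : ℝ) + 1) * ((l₁ + p.1 : ℕ) : ℝ) ^ (i - 1)) * a (l₁ + p.1 + p.2))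
        ≤ ∑' n : ℕ, (((((l₁ + n : ℕ) : ℝ) + 1) ^ (i + 1) - ((l₁ : ℝ) - 1) ^ (i + 1)) / i
            - (((l₁ + n : ℕ) : ℝ) ^ (i + 1) - (l₁ : ℝ) ^ (i + 1)) / (i + 1)) * a (l₁ + n) := by
  obtain ⟨k, rfl⟩ := Nat.exists_eq_add_of_le' hi1
  simpa [add_assoc, one_add_one_eq_two] using double_sum_superposition_bounds_general k
    (Nat.one_le_cast.2 hl1) (fun n => ha (l₁ + n)) (by simpa [add_assoc] using hsum)

end NSE
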